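/- For any nonzero polynomials M, N ∈ F_p[t], the Carlitz polynomials satisfy [MN](x) = [M]([N](x)). -/

import Mathlib

open Polynomial

/-- The image of `F_p[t]` in an extension `L` of `F_p(t)`. -/
noncomputable def carlitzMap (p : ℕ) [Fact p.Prime] (L : Type*) [Field L]
    [Algebra (RatFunc (ZMod p)) L] : Polynomial (ZMod p) →+* L :=
  (algebraMap (RatFunc (ZMod p)) L).comp (algebraMap (Polynomial (ZMod p)) (RatFunc (ZMod p)))

/-- The basic Carlitz operator `[t](x) = x^p + t·x`. -/
noncomputable def carlitzT (p : ℕ) [Fact p.Prime] (L : Type*) [Field L]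
    [Algebra (RatFunc (ZMod p)) L] (x : L) : L :=
  x ^ p + carlitzMap p L X * x

/-- The Carlitz polynomial action: `[M](x)`, defined by `[t^n](x) = [t]([t^{n-1}](x))`
and `F_p`-linear extension in `M`. -/
noncomputable def carlitz (p : ℕ) [Fact p.Prime] (L : Type*) [Field L]
    [Algebra (RatFunc (ZMod p)) L] (M : Polynomial (ZMod p)) (x : L) : L :=
  ∑ i ∈ M.support, carlitzMap p L (C (M.coeff i)) * (carlitzT p L)^[i] x

section

variable (p : ℕ) [Fact p.Prime] (L : Type*) [Field L] [Algebra (RatFunc (ZMod p)) L]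

/-- The operator `[t]` is additive, as `L` has characteristic `p`. -/
theorem carlitzT_add (x y : L) : carlitzT p L (x + y) = carlitzT p L x + carlitzT p L y := by
  have : CharP L p := charP_of_injective_ringHom ((carlitzMap p L).comp C).injective p
  simp only [carlitzT, add_pow_char]
  ring

theorem carlitzT_C_mul (c : ZMod p) (x : L) :
    carlitzT p L (carlitzMap p L (C c) * x) = carlitzMap p L (C c) * carlitzT p L x := by
  simp only [carlitzT, mul_pow, ← map_pow, ZMod.pow_card]
  ring

/-- The `F_p`-algebra structure that `carlitzMap` induces on `L`. -/
noncomputable abbrev carlitzAlgebra : Algebra (ZMod p) L :=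
  ((carlitzMap p L).comp C).toAlgebra

/-- The operator `[t]` as an `F_p`-linear endomorphism of `L`. -/
noncomputable def carlitzEnd :
    letI := carlitzAlgebra p L
    Module.End (ZMod p) L :=
  letI := carlitzAlgebra p L
  { toFun := carlitzT p L
    map_add' := carlitzT_add p L
    map_smul' := carlitzT_C_mul p L }

/-- `[M]` is the value of the polynomial `M` at the endomorphism `[t]`. -/
theorem carlitz_eq_aeval (M : Polynomial (ZMod p)) (x : L) :
    letI := carlitzAlgebra p L
    carlitz p L M x = aeval (carlitzEnd p L) M x := by
  let := carlitzAlgebra p L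
  rw [aeval_eq_sum_range, LinearMap.sum_apply, carlitz,
    Finset.sum_subset supp_subset_range_natDegree_succ]
  · refine Finset.sum_congr rfl fun i _ => ?_
    rw [LinearMap.smul_apply, Module.End.pow_apply]
    rfl
  · intro i _ hi
    simp [notMem_support_iff.mp hi]

end

/-- `[MN](x) = [M]([N](x))` for nonzero `M, N`. -/
theorem carlitz_mul (p : ℕ) [Fact p.Prime] (L : Type*) [Field L]
    [Algebra (RatFunc (ZMod p)) L] (M N : Polynomial (ZMod p))
    (hM : M ≠ 0) (hN : N ≠ 0) (x : L) :
    carlitz p L (M * N) x = carlitz p L M (carlitz p L N x) := by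
  simp only [carlitz_eq_aeval, map_mul, Module.End.mul_apply]
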